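/- (Theorem 2, Case 1 of the cascade Gaussian optimization.) Assume D₂·(sX + sZ) < sX·sZ (i.e. D₂ is strictly below the conditional variance σ²_{X|Y} = sX·sZ/(sX + sZ)) and r·D₂·(sX·sZ − D₂·sZ − D₂·sX) ≥ sX·sZ·(sX − D₂). Then s̄ := (1/D₂ − 1/sZ − 1/sX)⁻¹ is the greatest element of the feasible set F, i.e. IsGreatest F s̄. -/

import Mathlib

/-- The feasible set of the cascade Gaussian optimization problem. -/
def feasible (sX sZ D₂ r : ℝ) : Set ℝ :=
  {s : ℝ | 0 < s ∧ ∃ α : ℝ,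
    (r - 1) * s ≥ (1 + α) ^ 2 * sX + α ^ 2 * sZ ∧
    s * (sX - D₂) ≤ α ^ 2 * (sX * D₂ + sZ * D₂ - sX * sZ) + 2 * α * sX * D₂ + D₂ * sX}

/-!
Let `X`, `Z`, `W` be independent centred Gaussians of variances `sX`, `sZ`, `s`, and put
`Y = X + Z`, `U = X + α Y + W`. The two constraints say `Var U ≤ r s` and `Var (X | U) ≤ D`.
As `U` is a function of `Y` and `X + W`, the error `Var (X | U)` is at least
`Var (X | Y, X + W) = (1 / s + 1 / sX + 1 / sZ)⁻¹`, with equality exactly when `U` weights `X + W`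
and `Y` by their precisions, i.e. when `α = s / sZ`. This lower bound increases with
`s`, so every feasible value is at most the one solving `1 / D = 1 / s + 1 / sX + 1 / sZ`. That
value is itself feasible if and only if the first constraint holds at `α = s / sZ`, where
`Var U = s² (sX - D) / D²`. Algebraically, the optimality of `α = s / sZ` is a completion of the
square.
-/

section PrecisionIdentities

variable {𝕜 : Type*} [Field 𝕜] {sX sZ D s : 𝕜}

theorem mul_sub_sub_eq_of_inv_eq_add (hsX : sX ≠ 0) (hsZ : sZ ≠ 0) (hD : D ≠ 0) (hs : s ≠ 0)
    (hprec : D⁻¹ = s⁻¹ + sX⁻¹ + sZ⁻¹) :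
    s * (sX * sZ - D * sZ - D * sX) = D * sX * sZ := by
  field_simp at hprec
  linear_combination hprec

theorem distortion_bound_eq_sub_sq (hsX : sX ≠ 0) (hsZ : sZ ≠ 0) (hD : D ≠ 0) (hs : s ≠ 0)
    (hprec : D⁻¹ = s⁻¹ + sX⁻¹ + sZ⁻¹) (α : 𝕜) :
    α ^ 2 * (sX * D + sZ * D - sX * sZ) + 2 * α * sX * D + D * sX
      = s * (sX - D) - D * sX * sZ / s * (α - s / sZ) ^ 2 := by
  have hgap := mul_sub_sub_eq_of_inv_eq_add hsX hsZ hD hs hprec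
  field_simp
  linear_combination (-α ^ 2 * sZ - s) * hgap

theorem one_add_div_eq_of_inv_eq_add (hsX : sX ≠ 0) (hD : D ≠ 0) (hs : s ≠ 0)
    (hprec : D⁻¹ = s⁻¹ + sX⁻¹ + sZ⁻¹) :
    1 + s / sZ = s * (sX - D) / (D * sX) :=
  calc 1 + s / sZ = s * (s⁻¹ + sZ⁻¹) := by field_simp
    _ = s * (D⁻¹ - sX⁻¹) := by rw [hprec]; ring
    _ = s * (sX - D) / (D * sX) := by field_simp

theorem variance_precision_weighted_eq (hsX : sX ≠ 0) (hsZ : sZ ≠ 0) (hD : D ≠ 0) (hs : s ≠ 0)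
    (hprec : D⁻¹ = s⁻¹ + sX⁻¹ + sZ⁻¹) :
    (1 + s / sZ) ^ 2 * sX + (s / sZ) ^ 2 * sZ + s = s ^ 2 * (sX - D) / D ^ 2 :=
  calc (1 + s / sZ) ^ 2 * sX + (s / sZ) ^ 2 * sZ + s
      = (1 + s / sZ) * ((1 + s / sZ) * sX + s) := by field_simp; ring
    _ = s ^ 2 * (sX - D) / D ^ 2 := by
      rw [one_add_div_eq_of_inv_eq_add hsX hD hs hprec]; field_simp; ring

end PrecisionIdentities

section Constraints

variable {𝕜 : Type*} [Field 𝕜] [LinearOrder 𝕜] [IsStrictOrderedRing 𝕜] {sX sZ D s r : 𝕜}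

theorem one_div_sub_sub_pos (hsX : 0 < sX) (hsZ : 0 < sZ) (hD : 0 < D)
    (h : D * (sX + sZ) < sX * sZ) : 0 < 1 / D - 1 / sZ - 1 / sX := by
  have heq : 1 / D - 1 / sZ - 1 / sX = (sX * sZ - D * (sX + sZ)) / (D * sX * sZ) := by
    field_simp
    ring
  rw [heq]
  exact div_pos (sub_pos.2 h) (by positivity)

theorem lt_of_inv_eq_add (hsX : 0 < sX) (hsZ : 0 < sZ) (hD : 0 < D) (hs : 0 < s)
    (hprec : D⁻¹ = s⁻¹ + sX⁻¹ + sZ⁻¹) : D < sX := by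
  rw [← inv_lt_inv₀ hsX hD, hprec]
  have : 0 < s⁻¹ := inv_pos.2 hs
  have : 0 < sZ⁻¹ := inv_pos.2 hsZ
  linarith

theorem distortion_constraint_iff (hsX : sX ≠ 0) (hsZ : sZ ≠ 0) (hD : D ≠ 0) (hs : s ≠ 0)
    (hprec : D⁻¹ = s⁻¹ + sX⁻¹ + sZ⁻¹) (t α : 𝕜) :
    t * (sX - D) ≤ α ^ 2 * (sX * D + sZ * D - sX * sZ) + 2 * α * sX * D + D * sX ↔
      D * sX * sZ / s * (α - s / sZ) ^ 2 ≤ (s - t) * (sX - D) := by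
  rw [distortion_bound_eq_sub_sq hsX hsZ hD hs hprec, sub_mul, le_sub_comm]

theorem distortion_constraint_self_iff (hsX : 0 < sX) (hsZ : 0 < sZ) (hD : 0 < D) (hs : 0 < s)
    (hprec : D⁻¹ = s⁻¹ + sX⁻¹ + sZ⁻¹) (α : 𝕜) :
    s * (sX - D) ≤ α ^ 2 * (sX * D + sZ * D - sX * sZ) + 2 * α * sX * D + D * sX ↔
      α = s / sZ := by
  have hcoeff : 0 < D * sX * sZ / s := by positivity
  rw [distortion_constraint_iff hsX.ne' hsZ.ne' hD.ne' hs.ne' hprec, sub_self, zero_mul,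
    ← not_lt, mul_pos_iff_of_pos_left hcoeff, not_lt, sq_nonpos_iff, sub_eq_zero]

theorem rate_constraint_precision_weighted_iff (hsX : sX ≠ 0) (hsZ : sZ ≠ 0) (hD : 0 < D)
    (hs : 0 < s) (hprec : D⁻¹ = s⁻¹ + sX⁻¹ + sZ⁻¹) :
    (1 + s / sZ) ^ 2 * sX + (s / sZ) ^ 2 * sZ ≤ (r - 1) * s ↔ s * (sX - D) ≤ r * D ^ 2 := by
  rw [sub_mul, one_mul, le_sub_iff_add_le,
    variance_precision_weighted_eq hsX hsZ hD.ne' hs.ne' hprec, div_le_iff₀ (by positivity),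
    ← mul_le_mul_iff_right₀ hs (b := s * (sX - D))]
  ring_nf

theorem mul_sub_le_iff_of_inv_eq_add (hsX : 0 < sX) (hsZ : 0 < sZ) (hD : D ≠ 0) (hs : 0 < s)
    (hprec : D⁻¹ = s⁻¹ + sX⁻¹ + sZ⁻¹) :
    s * (sX - D) ≤ r * D ^ 2 ↔
      sX * sZ * (sX - D) ≤ r * D * (sX * sZ - D * sZ - D * sX) := by
  have hr_mul : sX * sZ * (r * D ^ 2) = s * (r * D * (sX * sZ - D * sZ - D * sX)) := by
    linear_combination -r * D * mul_sub_sub_eq_of_inv_eq_add hsX.ne' hsZ.ne' hD hs.ne' hprec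
  calc s * (sX - D) ≤ r * D ^ 2
      ↔ sX * sZ * (s * (sX - D)) ≤ sX * sZ * (r * D ^ 2) :=
        (mul_le_mul_iff_right₀ (mul_pos hsX hsZ)).symm
    _ ↔ s * (sX * sZ * (sX - D)) ≤ s * (r * D * (sX * sZ - D * sZ - D * sX)) := by
      rw [mul_left_comm, hr_mul]
    _ ↔ sX * sZ * (sX - D) ≤ r * D * (sX * sZ - D * sZ - D * sX) := mul_le_mul_iff_right₀ hs

end Constraints

section Feasible

variable {sX sZ D s r : ℝ}

theorem mem_upperBounds_feasible (hsX : 0 < sX) (hsZ : 0 < sZ) (hD : 0 < D) (hs : 0 < s)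
    (hprec : D⁻¹ = s⁻¹ + sX⁻¹ + sZ⁻¹) : s ∈ upperBounds (feasible sX sZ D r) := by
  rintro t ⟨-, α, -, hdist⟩
  have hDX : 0 < sX - D := sub_pos.2 (lt_of_inv_eq_add hsX hsZ hD hs hprec)
  rw [distortion_constraint_iff hsX.ne' hsZ.ne' hD.ne' hs.ne' hprec] at hdist
  have hprod : 0 ≤ (s - t) * (sX - D) := le_trans (by positivity) hdist
  exact sub_nonneg.1 (nonneg_of_mul_nonneg_left hprod hDX)

theorem mem_feasible_iff_of_inv_eq_add (hsX : 0 < sX) (hsZ : 0 < sZ) (hD : 0 < D) (hs : 0 < s)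
    (hprec : D⁻¹ = s⁻¹ + sX⁻¹ + sZ⁻¹) :
    s ∈ feasible sX sZ D r ↔ s * (sX - D) ≤ r * D ^ 2 := by
  simp only [feasible, Set.mem_ofPred_eq, hs, true_and, ge_iff_le, exists_eq_right,
    distortion_constraint_self_iff hsX hsZ hD hs hprec]
  exact rate_constraint_precision_weighted_iff hsX.ne' hsZ.ne' hD hs hprec

theorem isGreatest_feasible_iff (hsX : 0 < sX) (hsZ : 0 < sZ) (hD : 0 < D) (hs : 0 < s)
    (hprec : D⁻¹ = s⁻¹ + sX⁻¹ + sZ⁻¹) :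
    IsGreatest (feasible sX sZ D r) s ↔ s * (sX - D) ≤ r * D ^ 2 :=
  (and_iff_left (mem_upperBounds_feasible hsX hsZ hD hs hprec)).trans
    (mem_feasible_iff_of_inv_eq_add hsX hsZ hD hs hprec)

end Feasible

/-- Theorem 2, Case 1 of the cascade Gaussian optimization. -/
theorem cascade_gaussian_case1 (sX sZ D₂ r : ℝ)
    (hsX : 0 < sX) (hsZ : 0 < sZ) (hD₂ : 0 < D₂) (hr : 1 < r)
    (h1 : D₂ * (sX + sZ) < sX * sZ)
    (h2 : r * D₂ * (sX * sZ - D₂ * sZ - D₂ * sX) ≥ sX * sZ * (sX - D₂)) :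
    IsGreatest (feasible sX sZ D₂ r) (1 / D₂ - 1 / sZ - 1 / sX)⁻¹ := by
  have hs : 0 < (1 / D₂ - 1 / sZ - 1 / sX)⁻¹ := inv_pos.2 (one_div_sub_sub_pos hsX hsZ hD₂ h1)
  have hprec : D₂⁻¹ = (1 / D₂ - 1 / sZ - 1 / sX)⁻¹⁻¹ + sX⁻¹ + sZ⁻¹ := by
    rw [inv_inv]
    ring
  exact (isGreatest_feasible_iff hsX hsZ hD₂ hs hprec).2
    ((mul_sub_le_iff_of_inv_eq_add hsX hsZ hD₂.ne' hs hprec).2 h2)
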